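/- arXiv:2307.07031 — 2 statements merged into one kernel-verified Lean document; each statement's English description precedes it below -/
import Mathlib

section
/- Let R be a ring equipped with a bivariant Sylvester module rank function dim_R, and let M be a left R-module which is the union of a directed family (M_i)_{i ∈ I} of R-submodules (directed by inclusion). Then dim_R(M) ≤ sup_{i ∈ I} dim_R(M_i). -/
/-!
For finitely generated `q ⊆ N ⊆ M`, the infimum defining `dim (q | M)` runs over more intermediate
modules than the one defining `dim (q | N)`, so enlarging the ambient module cannot raise the rank;
in particular `dim (N | M) ≤ dim N`. On the other hand, a finitely generated submodule of a
directed union lies in one member of the family, so `dim (· | M)` is continuous along directed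
unions, and `dim M = sup dim (Mᵢ | M) ≤ sup dim Mᵢ`.
-/

open scoped ENNReal

/-- A bivariant Sylvester module rank function on a ring `R`:
it assigns to every pair `M₁ ⊆ M₂` of left `R`-modules (encoded as a module `M₂`
together with a submodule `M₁` of it) a value in `[0,∞]`. -/
structure BSMRF (R : Type) [Ring R] where
  /-- the value `dim (M₁ | M₂)` on a pair `M₁ ⊆ M₂`. -/
  dim : ∀ (M : Type) [AddCommGroup M] [Module R M], Submodule R M → ℝ≥0∞
  /-- isomorphism invariance -/
  dim_congr : ∀ (M : Type) [AddCommGroup M] [Module R M] (N : Type) [AddCommGroup N]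
      [Module R N] (e : M ≃ₗ[R] N) (p : Submodule R M),
      dim M p = dim N (p.map (e : M →ₗ[R] N))
  /-- normalization: the zero module has dimension `0` -/
  dim_punit : dim PUnit ⊤ = 0
  /-- normalization: the ring itself has dimension `1` -/
  dim_self : dim R ⊤ = 1
  /-- additivity with respect to direct sums of pairs -/
  dim_prod : ∀ (M : Type) [AddCommGroup M] [Module R M] (N : Type) [AddCommGroup N]
      [Module R N] (p : Submodule R M) (q : Submodule R N),
      dim (M × N) (p.prod q) = dim M p + dim N q
  /-- continuity: `dim (M₁ | M₂)` is the sup over finitely generated submodules of `M₁` -/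
  dim_sup : ∀ (M : Type) [AddCommGroup M] [Module R M] (p : Submodule R M),
      dim M p = ⨆ (q : Submodule R M) (_ : q ≤ p) (_ : q.FG), dim M q
  /-- continuity: for finitely generated `M₁`, `dim (M₁ | M₂)` is the inf over finitely
  generated intermediate submodules `M₁ ⊆ M₂' ⊆ M₂` of `dim (M₁ | M₂')` -/
  dim_inf : ∀ (M : Type) [AddCommGroup M] [Module R M] (p : Submodule R M), p.FG →
      dim M p = ⨅ (q : Submodule R M) (_ : p ≤ q) (_ : q.FG), dim q (p.comap q.subtype)
  /-- additivity -/
  dim_additive : ∀ (M : Type) [AddCommGroup M] [Module R M] (p : Submodule R M),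
      dim M ⊤ = dim M p + dim (M ⧸ p) ⊤

variable {R : Type} [Ring R]

/-- The dimension of a module `M`, namely `dim (M | M)`. -/
def BSMRF.dimM (d : BSMRF R) (M : Type) [AddCommGroup M] [Module R M] : ℝ≥0∞ :=
  d.dim M ⊤

/-- A bivariant Sylvester module rank function is exact if `dim (M₁ | M₂) = dim M₁`
for every pair `M₁ ⊆ M₂`. -/
def BSMRF.Exact (d : BSMRF R) : Prop :=
  ∀ (M : Type) [AddCommGroup M] [Module R M] (p : Submodule R M), d.dim M p = d.dimM p

/-- An `R`-linear map is a `dim`-isomorphism if its kernel and cokernel have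
dimension zero. -/
def BSMRF.IsDimIso (d : BSMRF R) {M N : Type} [AddCommGroup M] [Module R M]
    [AddCommGroup N] [Module R N] (f : M →ₗ[R] N) : Prop :=
  d.dimM (LinearMap.ker f) = 0 ∧ d.dimM (N ⧸ LinearMap.range f) = 0

namespace BSMRF

variable (d : BSMRF R) {M N : Type} [AddCommGroup M] [Module R M] [AddCommGroup N] [Module R N]

theorem dim_mono : Monotone (d.dim M) := by
  intro p q hpq
  rw [d.dim_sup M p, d.dim_sup M q]
  exact biSup_mono fun r hr => hr.trans hpq

theorem dim_comap_subtype_map {f : M →ₗ[R] N} (hf : Function.Injective f) (p r : Submodule R M) :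
    d.dim (r.map f) ((p.map f).comap (r.map f).subtype) = d.dim r (p.comap r.subtype) := by
  rw [d.dim_congr r (r.map f) (r.equivMapOfInjective f hf)]
  congr 1
  ext y
  obtain ⟨x, rfl⟩ := (r.equivMapOfInjective f hf).surjective y
  simp [hf.eq_iff]

theorem dim_map_le_of_fg_of_injective {f : M →ₗ[R] N} (hf : Function.Injective f)
    {p : Submodule R M} (hp : p.FG) : d.dim N (p.map f) ≤ d.dim M p := by
  rw [d.dim_inf M p hp, d.dim_inf N (p.map f) (hp.map f)]
  refine le_iInf₂ fun r hpr => le_iInf fun hr => ?_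
  rw [← d.dim_comap_subtype_map hf]
  exact iInf₂_le_of_le (r.map f) (Submodule.map_mono hpr) (iInf_le _ (hr.map f))

theorem dim_map_le_of_injective {f : M →ₗ[R] N} (hf : Function.Injective f) (p : Submodule R M) :
    d.dim N (p.map f) ≤ d.dim M p := by
  rw [d.dim_sup N (p.map f)]
  refine iSup₂_le fun q hq => iSup_le fun hqfg => ?_
  obtain ⟨r, hrp, rfl⟩ : ∃ r ≤ p, r.map f = q :=
    ⟨q.comap f, (Submodule.comap_mono hq).trans_eq (Submodule.comap_map_eq_of_injective hf p),
      Submodule.map_comap_eq_self (hq.trans LinearMap.map_le_range)⟩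
  have hr : r.FG := (Submodule.fg_map_iff f hf).mp hqfg
  exact (d.dim_map_le_of_fg_of_injective hf hr).trans (d.dim_mono hrp)

theorem dim_le_dimM (p : Submodule R M) : d.dim M p ≤ d.dimM p := by
  simpa only [dimM, Submodule.map_subtype_top] using d.dim_map_le_of_injective p.subtype_injective ⊤

theorem dim_bot : d.dim M ⊥ = 0 := by
  have hpunit : d.dim M (Submodule.map (0 : PUnit →ₗ[R] M) ⊤) ≤ d.dim PUnit ⊤ :=
    d.dim_map_le_of_injective (Function.injective_of_subsingleton _) ⊤
  simpa only [Submodule.map_zero, d.dim_punit, nonpos_iff_eq_zero] using hpunit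

theorem dim_iSup_of_directed {ι : Sort*} {p : ι → Submodule R M} (hp : Directed (· ≤ ·) p) :
    d.dim M (⨆ i, p i) = ⨆ i, d.dim M (p i) := by
  cases isEmpty_or_nonempty ι
  · simp only [iSup_of_empty, dim_bot, ENNReal.bot_eq_zero]
  refine le_antisymm ?_ d.dim_mono.le_map_iSup
  rw [d.dim_sup M (⨆ i, p i)]
  refine iSup₂_le fun q hq => iSup_le fun hqfg => ?_
  obtain ⟨_, ⟨i, rfl⟩, hqi⟩ := (Submodule.fg_iff_compact q).mp hqfg (Set.range p) (⨆ i, p i)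
    (Set.range_nonempty p) hp.directedOn_range isLUB_iSup hq
  exact le_iSup_of_le i (d.dim_mono hqi)

end BSMRF

theorem dim_le_iSup_of_directed_union_general (d : BSMRF R) {M : Type} [AddCommGroup M]
    [Module R M] {ι : Sort*} {p : ι → Submodule R M} (hp : Directed (· ≤ ·) p) :
    d.dim M (⨆ i, p i) ≤ ⨆ i, d.dimM (p i) :=
  (d.dim_iSup_of_directed hp).trans_le (iSup_mono fun i => d.dim_le_dimM (p i))

/-- If a left `R`-module `M` is the union of a directed family of
submodules `(Mᵢ)`, then `dim_R M ≤ ⨆ i, dim_R Mᵢ`. -/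
theorem dim_le_iSup_of_directed_union (d : BSMRF R)
    (M : Type) [AddCommGroup M] [Module R M] {ι : Type} (p : ι → Submodule R M)
    (hdir : Directed (· ≤ ·) p) (hunion : (⋃ i, (p i : Set M)) = Set.univ) :
    d.dimM M ≤ ⨆ i, d.dimM (p i) := by
  have htop : ⨆ i, p i = ⊤ :=
    top_unique ((Set.univ_subset_iff.mpr hunion).trans (Set.iUnion_subset fun i => le_iSup p i))
  simpa only [BSMRF.dimM, htop] using dim_le_iSup_of_directed_union_general d hdir
end

section
/- Let G be a countable group and H a subgroup of G of infinite index (i.e., the coset space G/H is infinite). Let X = ∏_{gH ∈ G/H} [0,1] be the space of functions from G/H to [0,1], equipped with the product measure μ of the Lebesgue measure on each factor (a probability measure), and let G act on X by permuting coordinates via left multiplication on cosets: (g · x)(kH) = x(g⁻¹kH). Then this measure-preserving action is ergodic: every measurable subset A ⊆ X satisfying g · A = A for all g ∈ G has μ(A) = 0 or μ(A) = 1. -/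
/-!
By a lemma of B. H. Neumann, a group is never a finite union of cosets of subgroups of infinite
index. If all orbits of `G` on `α` are infinite, then the elements moving `a` to `b` form a coset of
such a subgroup, so every finite set of coordinates has a translate disjoint from it. Hence every
cylinder of the product space is independent of one of its translates.

Independence of `(C, D)` is a closed condition for the distance `μ (C ∆ C') + μ (D ∆ D')`. An
invariant set `A` is a limit of cylinders `C`, and by invariance it is also the limit of their
translates; so `A` is independent of itself, that is, `μ A = μ A ^ 2`.
-/

open MeasureTheory

open ProbabilityTheory
open scoped symmDiff Pointwise

section IndependentPairs

variable {Ω : Type*} [MeasurableSpace Ω] {μ : Measure Ω}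

theorem lipschitzWith_measureReal_inter [IsFiniteMeasure μ] :
    LipschitzWith 2 fun p : MeasuredSets μ × MeasuredSets μ ↦ μ.real (p.1 ∩ p.2) := by
  refine .of_le_add_mul 2 fun p q ↦ ?_
  have hsub : (p.1 ∩ p.2 : Set Ω) ⊆ q.1 ∩ q.2 ∪ ((p.1 : Set Ω) ∆ q.1 ∪ (p.2 : Set Ω) ∆ q.2) := by
    intro x
    simp only [Set.mem_symmDiff, Set.mem_inter_iff, Set.mem_union]
    tauto
  calc μ.real (p.1 ∩ p.2)
    _ ≤ μ.real (q.1 ∩ q.2) + (dist p.1 q.1 + dist p.2 q.2) := by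
      rw [MeasuredSets.dist_def, MeasuredSets.dist_def]
      grw [measureReal_mono hsub, measureReal_union_le, measureReal_union_le]
    _ ≤ μ.real (q.1 ∩ q.2) + 2 * dist p q := by
      rw [two_mul]
      gcongr
      · exact le_max_left _ _
      · exact le_max_right _ _

theorem isClosed_setOf_indepSet [IsZeroOrProbabilityMeasure μ] :
    IsClosed {p : MeasuredSets μ × MeasuredSets μ | IndepSet (p.1 : Set Ω) p.2 μ} := by
  have hμ : Continuous fun s : MeasuredSets μ ↦ μ.real s :=
    MeasuredSets.lipschitzWith_measureReal.continuous
  have hiff (p : MeasuredSets μ × MeasuredSets μ) : IndepSet (p.1 : Set Ω) p.2 μ ↔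
      μ.real (p.1 ∩ p.2) = μ.real p.1 * μ.real p.2 := by
    simp only [measureReal_def, ← ENNReal.toReal_mul]
    rw [ENNReal.toReal_eq_toReal_iff' (by finiteness) (by finiteness)]
    exact indepSet_iff_measure_inter_eq_mul p.1.2 p.2.2 μ
  simp only [hiff]
  exact isClosed_eq lipschitzWith_measureReal_inter.continuous
    ((hμ.comp continuous_fst).mul (hμ.comp continuous_snd))

end IndependentPairs

section Ergodicity

variable {M X : Type*} [SMul M X] [MeasurableSpace X] {μ : Measure X}

theorem measure_symmDiff_preimage_of_ae_invariant {f : X → X}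
    (hf : MeasurePreserving f μ μ) {A C : Set X} (hA : NullMeasurableSet A μ)
    (hC : NullMeasurableSet C μ) (hinv : f ⁻¹' A =ᵐ[μ] A) :
    μ (A ∆ (f ⁻¹' C)) = μ (A ∆ C) :=
  calc μ (A ∆ (f ⁻¹' C))
    _ = μ (f ⁻¹' (A ∆ C)) := measure_congr (hinv.symm.symmDiff .rfl)
    _ = μ (A ∆ C) := hf.measure_preimage (hA.symmDiff hC)

theorem ergodicSMul_of_dense_indepSet_preimage_smul [IsProbabilityMeasure μ]
    [MeasurableConstSMul M X] [SMulInvariantMeasure M X μ]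
    (hdense : Dense {C : MeasuredSets μ | ∃ g : M, IndepSet (C : Set X) ((g • ·) ⁻¹' C) μ}) :
    ErgodicSMul M X μ where
  aeconst_of_forall_preimage_smul_ae_eq {A} hA hinv := by
    let A' : MeasuredSets μ := ⟨A, hA⟩
    have hself : IndepSet A A μ := by
      suffices (A', A') ∈ closure {p : MeasuredSets μ × MeasuredSets μ |
          IndepSet (p.1 : Set X) p.2 μ} from isClosed_setOf_indepSet.closure_subset this
      refine EMetric.mem_closure_iff.2 fun ε hε ↦ ?_
      obtain ⟨C, ⟨g, hg⟩, hCA⟩ := EMetric.mem_closure_iff.1 (hdense A') ε hε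
      have hmp : MeasurePreserving (g • · : X → X) μ μ := measurePreserving_smul g μ
      refine ⟨(C, ⟨(g • ·) ⁻¹' C, hmp.measurable C.2⟩), hg, max_lt hCA ?_⟩
      exact (measure_symmDiff_preimage_of_ae_invariant hmp hA.nullMeasurableSet
        C.2.nullMeasurableSet (hinv g)).trans_lt hCA
    rw [Filter.eventuallyConst_set', ae_eq_empty, ae_eq_univ, prob_compl_eq_zero_iff hA]
    exact measure_eq_zero_or_one_of_indepSet_self hself

theorem measure_eq_zero_or_one_of_forall_preimage_smul_ae_eq (M : Type*) [SMul M X]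
    [IsProbabilityMeasure μ] [ErgodicSMul M X μ] {A : Set X} (hA : NullMeasurableSet A μ)
    (hinv : ∀ g : M, (g • ·) ⁻¹' A =ᵐ[μ] A) : μ A = 0 ∨ μ A = 1 := by
  rw [← prob_compl_eq_zero_iff₀ hA, ← ae_eq_empty, ← ae_eq_univ, ← Filter.eventuallyConst_set']
  exact aeconst_of_forall_preimage_smul_ae_eq M hA hinv

end Ergodicity

section Cylinders

variable {ι : Type*} {Y : ι → Type*} [∀ i, MeasurableSpace (Y i)]

theorem dense_measurableCylinders (μ : Measure (∀ i, Y i)) [IsFiniteMeasure μ] :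
    Dense {C : MeasuredSets μ | (C : Set (∀ i, Y i)) ∈ measurableCylinders Y} :=
  dense_of_generateFrom_isSetRing isSetRing_measurableCylinders
    ⟨{Set.univ}, Set.countable_singleton _,
      Set.singleton_subset_iff.2 (univ_mem_measurableCylinders _), by simp⟩
    generateFrom_measurableCylinders.symm

theorem indepSet_cylinder_of_disjoint (μ : ∀ i, Measure (Y i))
    [∀ i, IsProbabilityMeasure (μ i)] {S T : Finset ι} (hST : Disjoint S T)
    {A : Set (∀ i : S, Y i)} (hA : MeasurableSet A)
    {B : Set (∀ i : T, Y i)} (hB : MeasurableSet B) :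
    IndepSet (cylinder S A) (cylinder T B) (Measure.infinitePi μ) := by
  have hcoord : iIndepFun (fun i (x : ∀ i, Y i) ↦ x i) (Measure.infinitePi μ) :=
    iIndepFun_infinitePi (X := fun _ y ↦ y) fun _ ↦ measurable_id
  have hrestrict : IndepFun S.restrict T.restrict (Measure.infinitePi μ) :=
    hcoord.indepFun_finset S T hST measurable_pi_apply
  exact (indepFun_iff_indepSet_preimage (by fun_prop) (by fun_prop)).1 hrestrict A B hA hB

end Cylinders

section CoordinateAction

variable {M α E : Type*} [SMul M α] [MeasurableSpace E]

theorem exists_preimage_smul_cylinder_eq [DecidableEq α] (g : M) (S : Finset α)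
    {B : Set (S → E)} (hB : MeasurableSet B) :
    ∃ B' : Set (↥(g • S) → E), MeasurableSet B' ∧
      (DomMulAct.mk g • · : (α → E) → α → E) ⁻¹' cylinder S B = cylinder (g • S) B' := by
  let φ : (↥(g • S) → E) → S → E := fun y i ↦ y ⟨g • i.1, Finset.smul_mem_smul_finset i.2⟩
  have hφ : Measurable φ := by fun_prop
  exact ⟨φ ⁻¹' B, hφ hB, rfl⟩

instance measurableConstSMul_domMulAct_pi : MeasurableConstSMul Mᵈᵐᵃ (α → E) where
  measurable_const_smul g :=
    measurable_pi_lambda _ fun a ↦ measurable_pi_apply (DomMulAct.mk.symm g • a)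

end CoordinateAction

section GroupAction

variable {G α : Type*} [Group G] [MulAction G α]

/-- P. M. Neumann's separation lemma. -/
theorem exists_disjoint_smul_finset [DecidableEq α] {S : Finset α}
    (hS : ∀ a ∈ S, (MulAction.orbit G a).Infinite) (T : Finset α) :
    ∃ g : G, Disjoint (g • S) T := by
  by_contra! hmeet
  choose! k hk using fun (p : α × α) (h : p.2 ∈ MulAction.orbit G p.1) ↦
    MulAction.mem_orbit_iff.1 h
  have hcover : ⋃ p ∈ S ×ˢ T, k p • (MulAction.stabilizer G p.1 : Set G) = Set.univ := by
    refine Set.eq_univ_of_forall fun g ↦ ?_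
    obtain ⟨_, hgS, hgT⟩ := Finset.not_disjoint_iff.1 (hmeet g)
    obtain ⟨a, ha, rfl⟩ := Finset.mem_smul_finset.1 hgS
    refine Set.mem_biUnion (Finset.mk_mem_product ha hgT) ?_
    rw [mem_leftCoset_iff, SetLike.mem_coe, MulAction.mem_stabilizer_iff, mul_smul,
      inv_smul_eq_iff]
    exact (hk (a, g • a) (MulAction.mem_orbit a g)).symm
  obtain ⟨p, hp, hfin⟩ := Subgroup.exists_finiteIndex_of_leftCoset_cover hcover
  refine hfin.index_ne_zero ?_
  rw [MulAction.index_stabilizer, (hS p.1 (Finset.mem_product.1 hp).1).ncard]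

variable {E : Type*} [MeasurableSpace E] (ν : Measure E) [IsProbabilityMeasure ν]

instance smulInvariantMeasure_domMulAct_infinitePi :
    SMulInvariantMeasure Gᵈᵐᵃ (α → E) (Measure.infinitePi fun _ : α ↦ ν) where
  measure_preimage_smul g _ hs := by
    have hmap := Measure.map_infinitePi_infinitePi_of_inj (P := fun _ : α ↦ ν)
      (MulAction.injective (DomMulAct.mk.symm g))
    exact Measure.measure_preimage_of_map_eq_self hmap hs.nullMeasurableSet

theorem exists_indepSet_preimage_smul_of_mem_measurableCylinders
    (horbit : ∀ a : α, (MulAction.orbit G a).Infinite) {C : Set (α → E)}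
    (hC : C ∈ measurableCylinders fun _ : α ↦ E) :
    ∃ g : Gᵈᵐᵃ, IndepSet C ((g • ·) ⁻¹' C) (Measure.infinitePi fun _ : α ↦ ν) := by
  classical
  obtain ⟨S, B, hB, rfl⟩ := (mem_measurableCylinders C).1 hC
  obtain ⟨g, hg⟩ := exists_disjoint_smul_finset (G := G) (fun a (_ : a ∈ S) ↦ horbit a) S
  obtain ⟨B', hB', hgB⟩ := exists_preimage_smul_cylinder_eq g S hB
  exact ⟨DomMulAct.mk g, hgB ▸ indepSet_cylinder_of_disjoint _ hg.symm hB hB'⟩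

/-- As `(DomMulAct.mk g • x) a = x (g • a)`, the left shift `x ↦ x (g⁻¹ • ·)` is the action of
`(DomMulAct.mk g)⁻¹`. -/
theorem bernoulli_coset_action_ergodic_general
    (horbit : ∀ a : α, (MulAction.orbit G a).Infinite) :
    ErgodicSMul Gᵈᵐᵃ (α → E) (Measure.infinitePi fun _ : α ↦ ν) :=
  ergodicSMul_of_dense_indepSet_preimage_smul <| (dense_measurableCylinders _).mono
    fun _ ↦ exists_indepSet_preimage_smul_of_mem_measurableCylinders ν horbit

end GroupAction

/-- Let `G` be a countable group and `H` a subgroup of infinite index.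
Let `X = ∏_{gH ∈ G/H} [0,1]` carry the product `μ` of Lebesgue measure on each factor
(characterized on measurable cylinder sets), and let `G` act on `X` by permuting the
coordinates via left multiplication on the cosets, `(g · x)(kH) = x(g⁻¹kH)`.  Then this
measure-preserving action is ergodic: every measurable `G`-invariant subset `A ⊆ X` has
`μ A = 0` or `μ A = 1`. -/
theorem bernoulli_coset_action_ergodic
    (G : Type) [Group G] [Countable G] (H : Subgroup G) (hH : Infinite (G ⧸ H))
    (μ : Measure ((G ⧸ H) → unitInterval)) [IsProbabilityMeasure μ]
    -- `μ` is the product over `G/H` of the Lebesgue measure on `[0,1]`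
    (hμ : ∀ (s : Finset (G ⧸ H)) (f : (G ⧸ H) → Set unitInterval),
      (∀ c, MeasurableSet (f c)) →
        μ {x | ∀ c ∈ s, x c ∈ f c} = ∏ c ∈ s, volume (f c))
    -- `A` is a measurable subset invariant under the `G`-action `(g • x) c = x (g⁻¹ • c)`
    (A : Set ((G ⧸ H) → unitInterval)) (hA : MeasurableSet A)
    (hinv : ∀ g : G,
      (fun (x : (G ⧸ H) → unitInterval) (c : G ⧸ H) => x (g⁻¹ • c)) ⁻¹' A = A) :
    μ A = 0 ∨ μ A = 1 := by
  obtain rfl : μ = Measure.infinitePi fun _ ↦ volume :=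
    Measure.eq_infinitePi _ fun s f hf ↦ hμ s f hf
  have horbit (c : G ⧸ H) : (MulAction.orbit G c).Infinite := by
    rw [MulAction.orbit_eq_univ]
    exact Set.infinite_univ
  have := bernoulli_coset_action_ergodic_general (volume : Measure unitInterval) horbit
  refine measure_eq_zero_or_one_of_forall_preimage_smul_ae_eq Gᵈᵐᵃ hA.nullMeasurableSet
    fun g ↦ .of_eq ?_
  simpa only [inv_inv] using! hinv (DomMulAct.mk.symm g)⁻¹
end
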